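/- Let X be a separable reflexive real Banach space (reflexive in the sense that the canonical embedding of X into its double dual is surjective), and let M be a nonempty, bounded, closed, convex subset of X. Let F : M → M be weakly sequentially continuous, i.e. whenever a sequence (x_n) in M converges weakly to some x ∈ M (meaning ℓ(x_n) → ℓ(x) for every continuous linear functional ℓ on X), the sequence (F(x_n)) converges weakly to F(x). Then F has at least one fixed point in M. -/

import Mathlib

/-!
Let `K` be the closure of a countable subset of `M` that is stable under `F` and under rational
convex combinations. It is convex, and `F` maps it into itself because a closed convex set contains
the weak limits of its sequences. Countably many functionals separate the points of `K`, so the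
weakly compact set `K` is weakly metrizable, weak sequential continuity of `F` on `K` is weak
continuity, and Tychonoff's theorem for the weak topology gives a fixed point.

Tychonoff's theorem follows from Brouwer's: by compactness it suffices to make `L (F x) = L x` for
one continuous linear map `L` into a finite-dimensional space at a time, and Ky Fan's inequality,
applied to the distance from `L y` to `L (F x)`, does that. For Brouwer's theorem on the simplex,
label a point by a coordinate that the map does not decrease. Scarf's parity count on dominant sets
of grid points then yields small sets carrying all labels.
-/

open Finset Filter Topology

section Parity

variable {V I : Type*} [DecidableEq V] [DecidableEq I]

theorem sum_card_erase_mem_eq_sum_card_insert_mem [Fintype V] (R D : Finset (Finset V)) :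
    ∑ σ ∈ R, #{x ∈ σ | σ.erase x ∈ D} = ∑ τ ∈ D, #{y ∈ τᶜ | insert y τ ∈ R} := by
  simp_rw [← card_sigma]
  refine card_nbij' (fun p ↦ ⟨p.1.erase p.2, p.2⟩) (fun p ↦ ⟨insert p.2 p.1, p.2⟩) ?_ ?_ ?_ ?_
  · rintro ⟨σ, x⟩ h
    simp_all [insert_erase]
  · rintro ⟨τ, y⟩ h
    simp_all
  · rintro ⟨σ, x⟩ h
    simp_all [insert_erase]
  · rintro ⟨τ, y⟩ h
    simp_all

theorem image_erase_of_eq {f : V → I} {s : Finset V} {a b : V} (hb : b ∈ s) (hab : a ≠ b)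
    (hf : f a = f b) : (s.erase a).image f = s.image f := by
  refine (image_mono f (erase_subset a s)).antisymm fun y hy ↦ ?_
  obtain ⟨x, hx, rfl⟩ := mem_image.1 hy
  by_cases hxa : x = a
  · exact mem_image.2 ⟨b, mem_erase.2 ⟨hab.symm, hb⟩, by rw [hxa, hf]⟩
  · exact mem_image_of_mem f (mem_erase.2 ⟨hxa, hx⟩)

theorem card_filter_image_erase_eq_two {f : V → I} {s : Finset V}
    (hs : #s = #(s.image f) + 1) : #{x ∈ s | (s.erase x).image f = s.image f} = 2 := by
  obtain ⟨a, ha, b, hb, hab, hf⟩ :=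
    exists_ne_map_eq_of_card_lt_of_maps_to (s := s) (t := s.image f) (by omega)
      fun x hx ↦ mem_image_of_mem f hx
  refine card_eq_two.2 ⟨a, b, hab, ext fun x ↦ ?_⟩
  simp only [mem_filter, mem_insert, mem_singleton]
  constructor
  · rintro ⟨hx, himage⟩
    have hinj : Set.InjOn f (s.erase x) := by
      rw [← card_image_iff, himage, card_erase_of_mem hx]
      omega
    by_contra! hne
    exact hab (hinj (by simp [ha, hne.1.symm]) (by simp [hb, hne.2.symm]) hf)
  · rintro (rfl | rfl)
    · exact ⟨ha, image_erase_of_eq hb hab hf⟩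
    · exact ⟨hb, image_erase_of_eq ha hab.symm hf.symm⟩

theorem even_card_filter_image_erase_eq [Fintype I] {c : V → I} {σ : Finset V}
    (hσ : #σ = Fintype.card I) (hc : σ.image c ≠ univ) (i : I) :
    Even #{x ∈ σ | (σ.erase x).image c = univ.erase i} := by
  by_cases himage : σ.image c = univ.erase i
  · rw [← himage, card_filter_image_erase_eq_two]
    · exact even_two
    · rw [himage, card_erase_add_one (mem_univ i), hσ, card_univ]
  · have hempty : {x ∈ σ | (σ.erase x).image c = univ.erase i} = ∅ := by
      refine filter_false_of_mem fun x hx hx_image ↦ ?_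
      have hins : σ.image c = insert (c x) (univ.erase i) := by
        rw [← hx_image, ← image_insert, insert_erase hx]
      by_cases hcx : c x = i
      · exact hc (by rw [hins, hcx, insert_erase (mem_univ i)])
      · exact himage (by rw [hins, insert_eq_of_mem (by simp [hcx])])
    simp [hempty]

end Parity

section Scarf

variable {V I α : Type*} [LinearOrder α] {u : I → V → α} {σ τ : Finset V} {m : I → V}

/-- Scarf's primitive sets, with several linear orders on the vertices encoded by the utilities
`u i`: no vertex beats, for every `i`, the `u i`-worst element of `σ`. -/
def IsDominant (u : I → V → α) (σ : Finset V) : Prop :=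
  ∀ y, ∃ i, ∀ x ∈ σ, u i y ≤ u i x

/-- `m i` is a `u i`-worst element of `σ`, for every `i`. -/
def IsWorst (u : I → V → α) (σ : Finset V) (m : I → V) : Prop :=
  ∀ i, m i ∈ σ ∧ ∀ x ∈ σ, u i (m i) ≤ u i x

/-- `y` beats the worst element of `τ` for every utility but `u k`: the condition on a vertex that
is to become the `u k`-worst one when added to `τ`. -/
def IsAboveExcept (u : I → V → α) (τ : Finset V) (k : I) (y : V) : Prop :=
  ∀ i ≠ k, ∃ x ∈ τ, u i x < u i y

theorem exists_isWorst (u : I → V → α) (hσ : σ.Nonempty) : ∃ m, IsWorst u σ m := by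
  choose m hm using fun i ↦ σ.exists_min_image (u i) hσ
  exact ⟨m, hm⟩

theorem IsWorst.eq_of_forall_le (hm : IsWorst u σ m) {i : I} (hu : (u i).Injective) {x : V}
    (hx : x ∈ σ) (hle : ∀ z ∈ σ, u i x ≤ u i z) : m i = x :=
  hu (((hm i).2 x hx).antisymm (hle _ (hm i).1))

namespace IsDominant

theorem mono (h : IsDominant u σ) (hτ : τ ⊆ σ) : IsDominant u τ := fun y ↦
  (h y).imp fun _ hi x hx ↦ hi x (hτ hx)

theorem image_isWorst [Fintype I] [DecidableEq V] (h : IsDominant u σ)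
    (hu : ∀ i, (u i).Injective) (hm : IsWorst u σ m) : univ.image m = σ := by
  refine Subset.antisymm (image_subset_iff.2 fun i _ ↦ (hm i).1) fun x hx ↦ ?_
  obtain ⟨i, hi⟩ := h x
  exact mem_image.2 ⟨i, mem_univ i, hm.eq_of_forall_le (hu i) hx hi⟩

theorem eq_of_isAboveExcept (h : IsDominant u τ) {y : V} {k l : I}
    (hk : IsAboveExcept u τ k y) (hl : IsAboveExcept u τ l y) : k = l := by
  by_contra hkl
  obtain ⟨i, hi⟩ := h y
  obtain ⟨x, hx, hlt⟩ : ∃ x ∈ τ, u i x < u i y := by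
    by_cases hik : i = k
    · exact hl i (hik ▸ hkl)
    · exact hk i hik
  exact hlt.not_ge (hi x hx)

theorem insert_iff_of_isAboveExcept [DecidableEq V] (h : IsDominant u τ) {k : I} {y : V}
    (hy : IsAboveExcept u τ k y) :
    IsDominant u (insert y τ) ↔ ∀ z, IsAboveExcept u τ k z → u k z ≤ u k y := by
  constructor
  · intro hins z hz
    obtain ⟨i, hi⟩ := hins z
    by_cases hik : i = k
    · exact hik ▸ hi y (mem_insert_self y τ)
    · obtain ⟨x, hx, hlt⟩ := hz i hik
      exact absurd (hi x (mem_insert_of_mem hx)) hlt.not_ge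
  · intro hmax z
    by_cases hz : IsAboveExcept u τ k z
    · obtain ⟨i, hi⟩ := h z
      obtain rfl : i = k := by
        by_contra hik
        obtain ⟨x, hx, hlt⟩ := hz i hik
        exact hlt.not_ge (hi x hx)
      exact ⟨i, forall_mem_insert _ _ _ |>.2 ⟨hmax z hz, hi⟩⟩
    · simp only [IsAboveExcept] at hz
      push Not at hz
      obtain ⟨i, hik, hi⟩ := hz
      obtain ⟨x, hx, hlt⟩ := hy i hik
      exact ⟨i, forall_mem_insert _ _ _ |>.2 ⟨(hi x hx).trans hlt.le, hi⟩⟩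

theorem exists_isAboveExcept_of_insert [Fintype I] [DecidableEq V] [DecidableEq I] {y : V}
    (h : IsDominant u (insert y τ)) (hu : ∀ i, (u i).Injective) (hm : IsWorst u τ m)
    (hy : y ∉ τ) (hτ : #τ + 1 = Fintype.card I) :
    ∃ k, IsAboveExcept u τ k y ∧ (univ.erase k).image m = τ := by
  obtain ⟨m', hm'⟩ := exists_isWorst u (insert_nonempty y τ)
  have himage := h.image_isWorst hu hm'
  have hinj : m'.Injective := by
    rw [← Set.injOn_univ, ← coe_univ, ← card_image_iff, himage, card_insert_of_notMem hy, hτ,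
      card_univ]
  obtain ⟨k, -, rfl⟩ := mem_image.1 (himage.symm ▸ mem_insert_self y τ)
  have hmem {i : I} (hi : i ≠ k) : m' i ∈ τ :=
    (mem_insert.1 (hm' i).1).resolve_left fun h ↦ hi (hinj h)
  refine ⟨k, fun i hi ↦ ⟨m' i, hmem hi, ?_⟩, ?_⟩
  · exact ((hm' i).2 _ (mem_insert_self _ τ)).lt_of_ne fun h ↦ hi (hinj (hu i h))
  · refine Subset.antisymm (image_subset_iff.2 fun i _ ↦ (hm i).1) fun x hx ↦ ?_
    obtain ⟨i, -, rfl⟩ := mem_image.1 (himage.symm ▸ mem_insert_of_mem hx)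
    refine mem_image.2 ⟨i, mem_erase.2 ⟨?_, mem_univ i⟩, ?_⟩
    · rintro rfl
      exact hy hx
    · exact hm.eq_of_forall_le (hu i) hx fun z hz ↦ (hm' i).2 z (mem_insert_of_mem hz)

theorem card_filter_insert_eq_two [Fintype V] [Fintype I] [DecidableEq V]
    [DecidablePred (IsDominant u)] (h : IsDominant u τ) (hu : ∀ i, (u i).Injective)
    (hne : τ.Nonempty) (hτ : #τ + 1 = Fintype.card I) (habove : ∀ k, ∃ y, IsAboveExcept u τ k y) :
    #{y ∈ τᶜ | IsDominant u (insert y τ)} = 2 := by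
  classical
  obtain ⟨m, hm⟩ := exists_isWorst u hne
  have himage := h.image_isWorst hu hm
  have hbest (k : I) : ∃ y, IsAboveExcept u τ k y ∧ ∀ z, IsAboveExcept u τ k z → u k z ≤ u k y := by
    obtain ⟨y, hy, hmax⟩ := exists_max_image {y | IsAboveExcept u τ k y} (u k)
      (by simpa [Finset.Nonempty] using habove k)
    exact ⟨y, by simpa using hy, by simpa using hmax⟩
  choose b hb hb_max using hbest
  have htwo := card_filter_image_erase_eq_two (f := m) (s := univ) (by rw [himage, hτ, card_univ])
  rw [himage] at htwo
  rw [← htwo]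
  refine (card_nbij b ?_ ?_ ?_).symm
  · intro k hk
    simp only [coe_filter, mem_univ, true_and, Set.mem_ofPred_eq, mem_compl] at hk ⊢
    refine ⟨fun hbk ↦ ?_, (h.insert_iff_of_isAboveExcept (hb k)).2 (hb_max k)⟩
    rw [← hk] at hbk
    obtain ⟨i, hi, hib⟩ := mem_image.1 hbk
    obtain ⟨x, hx, hlt⟩ := hb k i (ne_of_mem_erase hi)
    exact hlt.not_ge (hib ▸ (hm i).2 x hx)
  · intro k _ l _ hkl
    exact h.eq_of_isAboveExcept (hb k) (hkl ▸ hb l)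
  · intro y hy
    simp only [coe_filter, mem_compl, Set.mem_ofPred_eq] at hy
    obtain ⟨k, hk, hkτ⟩ := hy.2.exists_isAboveExcept_of_insert hu hm hy.1 hτ
    refine ⟨k, by simpa using hkτ, hu k (le_antisymm ?_ (hb_max k y hk))⟩
    exact (h.insert_iff_of_isAboveExcept hk).1 hy.2 _ (hb k)

end IsDominant

/-- Scarf's slack vertices: `g i` is the `u i`-worst vertex of all, while for the other utilities it
beats every vertex outside the family. -/
structure IsSlackFamily (u : I → V → α) (g : I → V) : Prop where
  le (i : I) (v : V) : u i (g i) ≤ u i v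
  lt {i j : I} (hij : i ≠ j) {v : V} (hv : v ∉ Set.range g) : u i v < u i (g j)

namespace IsSlackFamily

variable {g : I → V}

theorem isDominant_image_erase [Fintype I] [DecidableEq I] [DecidableEq V]
    (hg : IsSlackFamily u g) (i : I) : IsDominant u ((univ.erase i).image g) := by
  intro y
  by_cases hy : y ∈ Set.range g
  · obtain ⟨j, rfl⟩ := hy
    exact ⟨j, fun x _ ↦ hg.le j x⟩
  · refine ⟨i, forall_mem_image.2 fun j hj ↦ (hg.lt (ne_of_mem_erase hj).symm hy).le⟩

theorem isAboveExcept_image_erase [Fintype I] [DecidableEq I] [DecidableEq V]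
    (hg : IsSlackFamily u g) (hu : ∀ i, (u i).Injective) {i : I} {y : V}
    (hy : y ∉ (univ.erase i).image g) : IsAboveExcept u ((univ.erase i).image g) i y := by
  intro j hj
  have hgj : g j ∈ (univ.erase i).image g := mem_image_of_mem g (by simp [hj])
  exact ⟨g j, hgj, (hg.le j y).lt_of_ne fun h ↦ hy (hu j h ▸ hgj)⟩

theorem isAboveExcept (hg : IsSlackFamily u g) {t : V} (ht : t ∈ τ) (htg : t ∉ Set.range g)
    (k : I) : IsAboveExcept u τ k (g k) := fun _ hi ↦ ⟨t, ht, hg.lt hi htg⟩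

theorem card_filter_insert_eq_one [Fintype V] [Fintype I] [DecidableEq I] [DecidableEq V]
    [DecidablePred (IsDominant u)] (hg : IsSlackFamily u g) (hu : ∀ i, (u i).Injective)
    (hg_inj : g.Injective) (i : I) :
    #{y ∈ ((univ.erase i).image g)ᶜ | IsDominant u (insert y ((univ.erase i).image g))} = 1 := by
  set τ := (univ.erase i).image g
  have habove {y : V} : IsAboveExcept u τ i y ↔ y ∉ τ := by
    refine ⟨fun hy hyτ ↦ ?_, hg.isAboveExcept_image_erase hu⟩
    obtain ⟨j, hj, rfl⟩ := mem_image.1 hyτ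
    obtain ⟨x, -, hlt⟩ := hy j (ne_of_mem_erase hj)
    exact hlt.not_ge (hg.le j x)
  have hgi : g i ∈ τᶜ := by simp [τ, hg_inj.eq_iff]
  obtain ⟨b, hb, hb_max⟩ := exists_max_image τᶜ (u i) ⟨g i, hgi⟩
  have hdom {y : V} (hy : y ∉ τ) : IsDominant u (insert y τ) ↔ ∀ z ∉ τ, u i z ≤ u i y := by
    rw [(hg.isDominant_image_erase i).insert_iff_of_isAboveExcept (habove.2 hy)]
    exact forall_congr' fun z ↦ imp_congr_left habove
  simp only [mem_compl] at hb hb_max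
  refine card_eq_one.2 ⟨b, ext fun y ↦ ?_⟩
  simp only [mem_filter, mem_compl, mem_singleton]
  constructor
  · rintro ⟨hy, hins⟩
    exact hu i ((hb_max y hy).antisymm ((hdom hy).1 hins b hb))
  · rintro rfl
    exact ⟨hb, (hdom hb).2 hb_max⟩

theorem eq_image_erase [Fintype I] [DecidableEq I] [DecidableEq V] {c : V → I}
    (hc : ∀ j, c (g j) = j) (hτg : ∀ t ∈ τ, t ∈ Set.range g) {i : I}
    (hτ : τ.image c = univ.erase i) : τ = (univ.erase i).image g := by
  rw [← hτ, image_image]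
  refine image_id.symm.trans (image_congr fun t ht ↦ ?_)
  obtain ⟨j, rfl⟩ := hτg t ht
  simp [hc]

theorem even_card_filter_insert [Fintype V] [Fintype I] [DecidableEq V]
    [DecidablePred (IsDominant u)] (hg : IsSlackFamily u g) (hu : ∀ i, (u i).Injective)
    {t : V} (ht : t ∈ τ) (htg : t ∉ Set.range g) :
    Even #{y ∈ τᶜ | #(insert y τ) = Fintype.card I ∧ IsDominant u (insert y τ)} := by
  by_cases h : #τ + 1 = Fintype.card I ∧ IsDominant u τ
  · have hcard : #{y ∈ τᶜ | IsDominant u (insert y τ)} = 2 :=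
      h.2.card_filter_insert_eq_two hu ⟨t, ht⟩ h.1 fun k ↦ ⟨g k, hg.isAboveExcept ht htg k⟩
    have hfilter : {y ∈ τᶜ | #(insert y τ) = Fintype.card I ∧ IsDominant u (insert y τ)} =
        {y ∈ τᶜ | IsDominant u (insert y τ)} := filter_congr fun y hy ↦ by
      simp [card_insert_of_notMem (mem_compl.1 hy), h.1]
    rw [hfilter, hcard]
    exact even_two
  · rw [filter_false_of_mem, card_empty]
    · exact Even.zero
    · rintro y hy ⟨hcard, hdom⟩
      rw [card_insert_of_notMem (mem_compl.1 hy)] at hcard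
      exact h ⟨hcard, hdom.mono (subset_insert y τ)⟩

theorem exists_isDominant_image_eq_univ [Finite V] [Fintype I] [Nonempty I] [DecidableEq I]
    (hg : IsSlackFamily u g) (hu : ∀ i, (u i).Injective) {c : V → I} (hc : ∀ i, c (g i) = i) :
    ∃ σ, IsDominant u σ ∧ σ.image c = univ := by
  classical
  cases nonempty_fintype V
  by_contra! hnot
  obtain ⟨i⟩ := ‹Nonempty I›
  let rooms : Finset (Finset V) := {σ | #σ = Fintype.card I ∧ IsDominant u σ}
  let doors : Finset (Finset V) := {τ | τ.image c = univ.erase i}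
  let τ₀ := (univ.erase i).image g
  have hg_inj : g.Injective := Function.LeftInverse.injective hc
  have hτ₀ : τ₀ ∈ doors := by simp [τ₀, doors, image_image, Function.comp_def, hc]
  have hτ₀_card : #τ₀ + 1 = Fintype.card I := by
    rw [card_image_of_injective _ hg_inj, card_erase_add_one (mem_univ i), card_univ]
  have heven : Even (∑ σ ∈ rooms, #{x ∈ σ | σ.erase x ∈ doors}) := by
    refine even_sum _ fun σ hσ ↦ ?_
    obtain ⟨hσ_card, hσ⟩ := (mem_filter.1 hσ).2
    simpa [doors] using even_card_filter_image_erase_eq hσ_card (hnot σ hσ) i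
  have hodd : #{y ∈ τ₀ᶜ | insert y τ₀ ∈ rooms} = 1 := by
    rw [← hg.card_filter_insert_eq_one hu hg_inj i]
    congr 1
    refine filter_congr fun y hy ↦ ?_
    simp [rooms, card_insert_of_notMem (mem_compl.1 hy), hτ₀_card, τ₀]
  have hrest : Even (∑ τ ∈ doors.erase τ₀, #{y ∈ τᶜ | insert y τ ∈ rooms}) := by
    refine even_sum _ fun τ hτ ↦ ?_
    obtain ⟨hne, hτ⟩ := mem_erase.1 hτ
    obtain ⟨t, ht, htg⟩ : ∃ t ∈ τ, t ∉ Set.range g := by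
      by_contra! h
      exact hne (eq_image_erase hc h (mem_filter.1 hτ).2)
    simpa [rooms] using hg.even_card_filter_insert hu ht htg
  rw [sum_card_erase_mem_eq_sum_card_insert_mem, ← add_sum_erase _ _ hτ₀, hodd] at heven
  exact Nat.not_even_iff_odd.2 (odd_one.add_even hrest) heven

end IsSlackFamily

end Scarf

section Grid

variable {I : Type*} [Fintype I] {N : ℕ}

theorem exists_sum_eq_of_le [Nonempty I] {μ : I → ℕ} (hμ : ∑ i, μ i ≤ N) :
    ∃ x : I → ℕ, ∑ i, x i = N ∧ ∀ i, μ i ≤ x i := by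
  classical
  obtain ⟨i⟩ := ‹Nonempty I›
  refine ⟨μ + Pi.single i (N - ∑ i, μ i), ?_, fun i ↦ by simp⟩
  simp [sum_add_distrib, hμ]

variable [DecidableEq I]

/-- The vertices of the subdivision of the standard simplex into cells of size `1 / N`: the points
with coordinates `x i / N`, together with a slack vertex for every `i`. -/
abbrev GridVertex (I : Type*) [Fintype I] [DecidableEq I] (N : ℕ) : Type _ :=
  ↥(piAntidiag (univ : Finset I) N) ⊕ I

namespace GridVertex

/-- The coordinates of a vertex. Those of a grid point are shifted by one, and the slack vertex of
`j` is placed beyond the `j`-th face, below all grid points in the coordinate `j` and above them in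
the others. -/
def height : GridVertex I N → I → ℕ :=
  Sum.elim (fun x i ↦ x.1 i + 1) (fun j i ↦ if i = j then 0 else N + 2)

/-- The height in the coordinate `i`, with ties broken by an arbitrary enumeration. -/
noncomputable def utility (i : I) (v : GridVertex I N) :
    ℕ ×ₗ Fin (Fintype.card (GridVertex I N)) :=
  toLex (v.height i, Fintype.equivFin _ v)

theorem utility_injective (i : I) : (utility (N := N) i).Injective := fun _ _ h ↦
  (Fintype.equivFin _).injective (congrArg (fun p ↦ (ofLex p).2) h)

theorem height_le_of_utility_le {i : I} {v w : GridVertex I N} (h : utility i v ≤ utility i w) :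
    v.height i ≤ w.height i := by
  rcases Prod.Lex.toLex_le_toLex.1 h with h | h
  · exact h.le
  · exact h.1.le

theorem utility_lt_of_height_lt {i : I} {v w : GridVertex I N} (h : v.height i < w.height i) :
    utility i v < utility i w :=
  Prod.Lex.toLex_lt_toLex.2 (.inl h)

theorem isSlackFamily_inr : IsSlackFamily (utility (N := N)) (Sum.inr : I → GridVertex I N) where
  le i v := by
    rcases eq_or_ne v (.inr i) with rfl | hv
    · rfl
    · refine (utility_lt_of_height_lt ?_).le
      rcases v with x | j
      · simp [height]
      · simp_all [height, eq_comm]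
  lt {i j} hij v hv := by
    rcases v with x | k
    · have hle : x.1 i ≤ N :=
        (single_le_sum_of_canonicallyOrdered (mem_univ i)).trans_eq (mem_piAntidiag.1 x.2).1
      refine utility_lt_of_height_lt ?_
      simp only [height, Sum.elim_inl, Sum.elim_inr, hij, if_false]
      omega
    · exact absurd ⟨k, rfl⟩ hv

end GridVertex

namespace IsDominant

open GridVertex

variable {σ : Finset (GridVertex I N)} {μ : I → ℕ}

theorem lt_sum_of_height [Nonempty I] (hσ : IsDominant utility σ)
    (hμ : ∀ i, ∃ v ∈ σ, v.height i ≤ μ i) : N < ∑ i, μ i := by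
  by_contra! hle
  obtain ⟨x, hx, hμx⟩ := exists_sum_eq_of_le hle
  obtain ⟨i, hi⟩ := hσ (.inl ⟨x, by simp [mem_piAntidiag, hx]⟩)
  obtain ⟨v, hv, hvμ⟩ := hμ i
  have hlt : x i + 1 ≤ v.height i := height_le_of_utility_le (hi v hv)
  have := hμx i
  omega

theorem lt_add_card_of_height [Nonempty I] (hσ : IsDominant utility σ)
    (hμ : ∀ i, ∃ v ∈ σ, v.height i ≤ μ i) {x : I → ℕ} (hx : ∑ i, x i = N)
    (hμx : ∀ i, μ i ≤ x i + 1) (i : I) : x i + 1 < μ i + Fintype.card I := by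
  have hN := hσ.lt_sum_of_height hμ
  have hrest : ∑ j ∈ univ.erase i, μ j ≤ ∑ j ∈ univ.erase i, (x j + 1) :=
    sum_le_sum fun j _ ↦ hμx j
  have hμ_split := add_sum_erase univ μ (mem_univ i)
  have hx_split := add_sum_erase univ (fun j ↦ x j + 1) (mem_univ i)
  have htotal : ∑ j, (x j + 1) = N + Fintype.card I := by simp [sum_add_distrib, hx]
  omega

end IsDominant

end Grid

theorem exists_sum_eq_forall_label_near {I : Type*} [Fintype I] [Nonempty I] (N : ℕ)
    (c : (I → ℕ) → I) :
    ∃ x : I → ℕ, ∑ i, x i = N ∧ ∀ i, x i < Fintype.card I ∨ ∃ y : I → ℕ, ∑ i, y i = N ∧ c y = i ∧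
      ∀ j, x j < y j + Fintype.card I ∧ y j < x j + Fintype.card I := by
  classical
  obtain ⟨σ, hσ, himage⟩ := (GridVertex.isSlackFamily_inr (N := N)).exists_isDominant_image_eq_univ
    GridVertex.utility_injective (c := Sum.elim (fun x ↦ c x.1) id) fun _ ↦ rfl
  have hlabel (i : I) : ∃ v ∈ σ, Sum.elim (fun x ↦ c x.1) id v = i :=
    mem_image.1 (himage.symm ▸ mem_univ i)
  have hne : σ.Nonempty := image_nonempty.1 (himage ▸ univ_nonempty)
  choose m hm hm_min using fun i ↦ σ.exists_min_image (GridVertex.height · i) hne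
  have hμ (i : I) : ∃ v ∈ σ, v.height i ≤ (m i).height i := ⟨m i, hm i, le_rfl⟩
  have hnear {x : ↥(piAntidiag univ N)} (hx : .inl x ∈ σ) (i : I) : (m i).height i ≤ x.1 i + 1 ∧
      x.1 i + 1 < (m i).height i + Fintype.card I :=
    ⟨hm_min i (.inl x) hx,
      hσ.lt_add_card_of_height hμ (mem_piAntidiag.1 x.2).1 (hm_min · (.inl x) hx) i⟩
  have hslack {i : I} (hi : .inr i ∈ σ) : (m i).height i = 0 := by
    simpa [GridVertex.height] using hm_min i _ hi
  obtain ⟨x, hx⟩ : ∃ x, .inl x ∈ σ := by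
    by_contra! h
    have hzero (i : I) : (m i).height i = 0 := by
      obtain ⟨x | j, hv, rfl⟩ := hlabel i
      · exact absurd hv (h x)
      · exact hslack hv
    simpa [hzero] using hσ.lt_sum_of_height hμ
  refine ⟨x.1, (mem_piAntidiag.1 x.2).1, fun i ↦ ?_⟩
  obtain ⟨y | j, hv, rfl⟩ := hlabel i
  · refine .inr ⟨y.1, (mem_piAntidiag.1 y.2).1, rfl, fun j ↦ ?_⟩
    have := hnear hx j
    have := hnear hv j
    omega
  · refine .inl ?_
    have := hnear hx j
    have := hslack hv
    simp only [Sum.elim_inr, id]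
    omega

section Brouwer

variable {I : Type*} [Fintype I] [Nonempty I]

theorem exists_mem_stdSimplex_forall_near_le {f : (I → ℝ) → I → ℝ}
    (hmaps : Set.MapsTo f (stdSimplex ℝ I) (stdSimplex ℝ I)) {N : ℕ} (hN : 0 < N) :
    ∃ x ∈ stdSimplex ℝ I, ∀ i, ∃ y ∈ stdSimplex ℝ I,
      dist x y ≤ Fintype.card I / N ∧ y i ≤ f y i + Fintype.card I / N := by
  have hN' : (0 : ℝ) < N := Nat.cast_pos.2 hN
  let p (x : I → ℕ) : I → ℝ := fun i ↦ x i / N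
  have hp {x : I → ℕ} (hx : ∑ i, x i = N) : p x ∈ stdSimplex ℝ I := by
    refine ⟨fun i ↦ by positivity, ?_⟩
    rw [← sum_div, ← Nat.cast_sum, hx, div_self hN'.ne']
  have hlabel (x : I → ℕ) : ∃ i, ∑ i, x i = N → p x i ≤ f (p x) i := by
    by_cases hx : ∑ i, x i = N
    · obtain ⟨i, -, hi⟩ := exists_le_of_sum_le univ_nonempty
        ((hp hx).2.trans (hmaps (hp hx)).2.symm).le
      exact ⟨i, fun _ ↦ hi⟩
    · simp [hx]
  choose c hc using hlabel
  obtain ⟨x, hx, hx_near⟩ := exists_sum_eq_forall_label_near N c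
  refine ⟨p x, hp hx, fun i ↦ ?_⟩
  rcases hx_near i with hi | ⟨y, hy, rfl, hxy⟩
  · refine ⟨p x, hp hx, by rw [dist_self]; positivity, ?_⟩
    have hle : p x i ≤ Fintype.card I / N := by
      simp only [p]
      gcongr
    linarith [(hmaps (hp hx)).1 i]
  · refine ⟨p y, hp hy, (dist_pi_le_iff (by positivity)).2 fun j ↦ ?_, ?_⟩
    · rw [Real.dist_eq, ← sub_div, abs_div, abs_of_pos hN']
      gcongr
      have hlt : (x j : ℝ) < y j + Fintype.card I := mod_cast (hxy j).1
      have hgt : (y j : ℝ) < x j + Fintype.card I := mod_cast (hxy j).2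
      exact abs_le.2 ⟨by linarith, by linarith⟩
    · linarith [hc y hy, show (0 : ℝ) ≤ Fintype.card I / N by positivity]

/-- **Brouwer's fixed point theorem** for the standard simplex. -/
theorem exists_fixedPoint_of_continuousOn_stdSimplex {f : (I → ℝ) → I → ℝ}
    (hf : ContinuousOn f (stdSimplex ℝ I))
    (hmaps : Set.MapsTo f (stdSimplex ℝ I) (stdSimplex ℝ I)) :
    ∃ x ∈ stdSimplex ℝ I, f x = x := by
  choose x hx y hy hxy hfy using fun N : ℕ ↦
    exists_mem_stdSimplex_forall_near_le hmaps N.succ_pos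
  obtain ⟨a, ha, φ, hφ, hlim⟩ := (isCompact_stdSimplex ℝ I).tendsto_subseq hx
  have hmesh : Tendsto (fun N ↦ (Fintype.card I : ℝ) / (φ N).succ) atTop (𝓝 0) :=
    (tendsto_const_div_atTop_nhds_zero_nat (Fintype.card I : ℝ)).comp
      ((tendsto_add_atTop_nat 1).comp hφ.tendsto_atTop)
  have hle (i : I) : a i ≤ f a i := by
    have hy_lim : Tendsto (fun N ↦ y (φ N) i) atTop (𝓝 a) :=
      hlim.congr_dist (squeeze_zero (fun _ ↦ dist_nonneg) (fun N ↦ hxy (φ N) i) hmesh)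
    have hfy_lim : Tendsto (fun N ↦ f (y (φ N) i)) atTop (𝓝 (f a)) :=
      (hf a ha).tendsto.comp (tendsto_nhdsWithin_iff.2 ⟨hy_lim, .of_forall fun N ↦ hy _ _⟩)
    refine le_of_tendsto_of_tendsto' (hy_lim.apply_nhds i) ?_ fun N ↦ hfy (φ N) i
    simpa using (hfy_lim.apply_nhds i).add hmesh
  have hsum : ∑ i, a i = ∑ i, f a i := by rw [ha.2, (hmaps ha).2]
  exact ⟨a, ha, funext fun i ↦
    ((sum_eq_sum_iff_of_le fun i _ ↦ hle i).1 hsum i (mem_univ i)).symm⟩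

end Brouwer

section Tychonoff

variable {E : Type*} [AddCommGroup E] [Module ℝ E] [TopologicalSpace E] {K : Set E}

theorem exists_mem_stdSimplex_eq_weight_div [ContinuousAdd E] [ContinuousSMul ℝ E]
    {ι : Type*} [Fintype ι] [Nonempty ι]
    (hK : Convex ℝ K) {p : ι → E} (hp : ∀ k, p k ∈ K) {w : ι → E → ℝ}
    (hw : ∀ k, ContinuousOn (w k) K) (hw_nonneg : ∀ k, ∀ x ∈ K, 0 ≤ w k x)
    (hw_pos : ∀ x ∈ K, ∃ k, 0 < w k x) :
    ∃ s ∈ stdSimplex ℝ ι, ∀ k, s k = w k (∑ j, s j • p j) / ∑ i, w i (∑ j, s j • p j) := by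
  let A (s : ι → ℝ) : E := ∑ j, s j • p j
  have hA : Set.MapsTo A (stdSimplex ℝ ι) K := fun s hs ↦
    hK.sum_mem (fun k _ ↦ hs.1 k) hs.2 fun k _ ↦ hp k
  have hsum_pos {s} (hs : s ∈ stdSimplex ℝ ι) : 0 < ∑ i, w i (A s) := by
    obtain ⟨k, hk⟩ := hw_pos _ (hA hs)
    exact sum_pos' (fun i _ ↦ hw_nonneg i _ (hA hs)) ⟨k, mem_univ k, hk⟩
  have hwA (k : ι) : ContinuousOn (fun s ↦ w k (A s)) (stdSimplex ℝ ι) :=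
    (hw k).comp (by fun_prop) hA
  obtain ⟨s, hs, hfix⟩ := exists_fixedPoint_of_continuousOn_stdSimplex
    (f := fun s k ↦ w k (A s) / ∑ i, w i (A s))
    (continuousOn_pi.2 fun k ↦ (hwA k).div (continuousOn_finsetSum _ fun i _ ↦ hwA i)
      fun s hs ↦ (hsum_pos hs).ne')
    fun s hs ↦ ⟨fun k ↦ div_nonneg (hw_nonneg k _ (hA hs)) (hsum_pos hs).le, by
      rw [← sum_div, div_self (hsum_pos hs).ne']⟩
  exact ⟨s, hs, fun k ↦ (congrFun hfix k).symm⟩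

/-- A form of **Ky Fan's minimax inequality**. -/
theorem exists_isMinOn_of_convexOn [ContinuousAdd E] [ContinuousSMul ℝ E]
    (hK : IsCompact K) (hne : K.Nonempty) (hconv : Convex ℝ K)
    {φ : E → E → ℝ} (hdiag : ContinuousOn (fun x ↦ φ x x) K)
    (hφ : ∀ y ∈ K, ContinuousOn (φ · y) K) (hφ_conv : ∀ x ∈ K, ConvexOn ℝ K (φ x)) :
    ∃ x ∈ K, IsMinOn (φ x) K x := by
  by_contra! hnot
  simp only [isMinOn_iff, not_forall, not_le, exists_prop] at hnot
  choose! b hbK hb using hnot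
  obtain ⟨t, htK, hcover⟩ := hK.elim_nhdsWithin_subcover (fun x ↦ {z | φ z (b x) < φ z z})
    fun x hx ↦ (hφ _ (hbK x hx) x hx).eventually_lt (hdiag x hx) (hb x hx)
  have hcover' {x : E} (hx : x ∈ K) : ∃ k : t, φ x (b k) < φ x x := by
    simpa using hcover hx
  have : Nonempty t := (hcover' hne.some_mem).nonempty
  let w (k : t) (x : E) : ℝ := max 0 (φ x x - φ x (b k))
  have hbt (k : t) : b k ∈ K := hbK k (htK k k.2)
  obtain ⟨s, hs, hfix⟩ := exists_mem_stdSimplex_eq_weight_div hconv hbt (w := w)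
    (fun k ↦ continuousOn_const.sup (hdiag.sub (hφ _ (hbt k)))) (fun _ _ _ ↦ le_max_left _ _)
    fun x hx ↦ (hcover' hx).imp fun k hk ↦ lt_max_of_lt_right (sub_pos.2 hk)
  set x := ∑ k, s k • b k
  have hx : x ∈ K := hconv.sum_mem (fun k _ ↦ hs.1 k) hs.2 fun k _ ↦ hbt k
  have hlt {k : t} (hk : 0 < s k) : φ x (b k) < φ x x := by
    by_contra! hle
    have hwk : w k x = 0 := max_eq_left (sub_nonpos.2 hle)
    exact hk.ne' (by rw [hfix k, hwk, zero_div])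
  have hle (k : t) : s k • φ x (b k) ≤ s k • φ x x := by
    rcases (hs.1 k).eq_or_lt with hk | hk
    · simp [← hk]
    · exact smul_le_smul_of_nonneg_left (hlt hk).le hk.le
  obtain ⟨k, hk_mem, hk⟩ : ∃ k ∈ univ, 0 < s k :=
    exists_lt_of_sum_lt (by rw [hs.2, sum_const_zero]; exact one_pos)
  refine lt_irrefl (φ x x) ?_
  calc φ x x ≤ ∑ k, s k • φ x (b k) :=
        (hφ_conv x hx).map_sum_le (fun k _ ↦ hs.1 k) hs.2 fun k _ ↦ hbt k
    _ < ∑ k, s k • φ x x :=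
        sum_lt_sum (fun k _ ↦ hle k) ⟨k, hk_mem, smul_lt_smul_of_pos_left (hlt hk) hk⟩
    _ = φ x x := by rw [← sum_smul, hs.2, one_smul]

theorem exists_map_apply_eq_of_isCompact_of_convex [ContinuousAdd E] [ContinuousSMul ℝ E]
    {G : Type*} [NormedAddCommGroup G] [NormedSpace ℝ G] (L : E →L[ℝ] G)
    (hK : IsCompact K) (hne : K.Nonempty) (hconv : Convex ℝ K)
    {F : E → E} (hF : ContinuousOn F K) (hmaps : Set.MapsTo F K K) :
    ∃ x ∈ K, L (F x) = L x := by
  have hLF : ContinuousOn (fun x ↦ L (F x)) K := L.continuous.comp_continuousOn hF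
  obtain ⟨x, hx, hmin⟩ := exists_isMinOn_of_convexOn hK hne hconv
    (φ := fun x y ↦ dist (L y) (L (F x)))
    (continuous_dist.comp_continuousOn (L.continuous.continuousOn.prodMk hLF))
    (fun y _ ↦ continuous_dist.comp_continuousOn (continuousOn_const.prodMk hLF))
    fun x _ ↦ ((convexOn_univ_dist (L (F x))).comp_linearMap L.toLinearMap).subset
      (Set.subset_univ K) hconv
  have hle : dist (L x) (L (F x)) ≤ 0 := by simpa using isMinOn_iff.1 hmin (F x) (hmaps hx)
  exact ⟨x, hx, (dist_le_zero.1 hle).symm⟩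

/-- The **Tychonoff fixed point theorem**. -/
theorem exists_fixedPoint_of_isCompact_of_convex [IsTopologicalAddGroup E] [ContinuousSMul ℝ E]
    [SeparatingDual ℝ E] (hK : IsCompact K) (hne : K.Nonempty) (hconv : Convex ℝ K)
    {F : E → E} (hF : ContinuousOn F K) (hmaps : Set.MapsTo F K K) : ∃ x ∈ K, F x = x := by
  have : T2Space E := SeparatingDual.t2Space (R := ℝ)
  let A (ℓ : StrongDual ℝ E) : Set E := K ∩ (fun x ↦ ℓ (F x) - ℓ x) ⁻¹' {0}
  have hA (ℓ : StrongDual ℝ E) : IsClosed (A ℓ) := by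
    have hcont : ContinuousOn (fun x ↦ ℓ (F x) - ℓ x) K :=
      (ℓ.continuous.comp_continuousOn hF).sub ℓ.continuous.continuousOn
    exact hcont.preimage_isClosed_of_isClosed hK.isClosed isClosed_singleton
  obtain ⟨x, hx, hxA⟩ := hK.inter_iInter_nonempty A hA fun s ↦ by
    obtain ⟨x, hx, hfix⟩ := exists_map_apply_eq_of_isCompact_of_convex
      (.pi fun ℓ : s ↦ ℓ.1) hK hne hconv hF hmaps
    exact ⟨x, hx, Set.mem_iInter₂.2 fun ℓ hℓ ↦ ⟨hx, sub_eq_zero.2 (congrFun hfix ⟨ℓ, hℓ⟩)⟩⟩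
  refine ⟨x, hx, (SeparatingDual.eq_iff_forall_dual_eq (R := ℝ)).2 fun ℓ ↦ ?_⟩
  exact sub_eq_zero.1 (Set.mem_iInter.1 hxA ℓ).2

end Tychonoff

section WeakTopology

variable {X : Type*} [AddCommGroup X] [Module ℝ X] [TopologicalSpace X] {F : X → X} {K M : Set X}

/-- Sequential continuity of `F` on `M` for the weak topology, in terms of functionals. -/
def WeakSeqContinuousOn (F : X → X) (M : Set X) : Prop :=
  ∀ (x : ℕ → X) (x₀ : X), (∀ n, x n ∈ M) → x₀ ∈ M →
    (∀ ℓ : X →L[ℝ] ℝ, Tendsto (fun n ↦ ℓ (x n)) atTop (𝓝 (ℓ x₀))) →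
    ∀ ℓ : X →L[ℝ] ℝ, Tendsto (fun n ↦ ℓ (F (x n))) atTop (𝓝 (ℓ (F x₀)))

theorem WeakSeqContinuousOn.mono (hF : WeakSeqContinuousOn F M) (hKM : K ⊆ M) :
    WeakSeqContinuousOn F K := fun x x₀ hx hx₀ ↦
  hF x x₀ (fun n ↦ hKM (hx n)) (hKM hx₀)

theorem continuous_apply_toWeakSpace_symm (ℓ : StrongDual ℝ X) :
    Continuous fun z : WeakSpace ℝ X ↦ ℓ ((toWeakSpace ℝ X).symm z) :=
  WeakBilin.eval_continuous (topDualPairing ℝ X).flip ℓ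

variable [SeparatingDual ℝ X]

instance separatingDual_weakSpace : SeparatingDual ℝ (WeakSpace ℝ X) where
  exists_ne_zero' z hz := by
    obtain ⟨ℓ, hℓ⟩ := SeparatingDual.exists_ne_zero (R := ℝ) (x := (toWeakSpace ℝ X).symm z)
      (by simpa using hz)
    exact ⟨⟨ℓ.toLinearMap ∘ₗ (toWeakSpace ℝ X).symm.toLinearMap,
      continuous_apply_toWeakSpace_symm ℓ⟩, hℓ⟩

theorem tendsto_toWeakSpace_iff {ι : Type*} {l : Filter ι} {x : ι → X} {x₀ : X} :
    Tendsto (fun i ↦ toWeakSpace ℝ X (x i)) l (𝓝 (toWeakSpace ℝ X x₀)) ↔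
      ∀ ℓ : StrongDual ℝ X, Tendsto (fun i ↦ ℓ (x i)) l (𝓝 (ℓ x₀)) := by
  refine WeakBilin.tendsto_iff_forall_eval_tendsto (topDualPairing ℝ X).flip fun x y hxy ↦ ?_
  exact (SeparatingDual.eq_iff_forall_dual_eq (R := ℝ)).2 fun ℓ ↦ LinearMap.congr_fun hxy ℓ

theorem WeakSeqContinuousOn.continuousOn (hF : WeakSeqContinuousOn F K)
    [TopologicalSpace.MetrizableSpace (toWeakSpace ℝ X '' K)] :
    ContinuousOn (fun z ↦ toWeakSpace ℝ X (F ((toWeakSpace ℝ X).symm z)))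
      (toWeakSpace ℝ X '' K) := by
  rw [continuousOn_iff_continuous_domRestrict, continuous_iff_seqContinuous]
  intro z z₀ hz
  have hmem (w : toWeakSpace ℝ X '' K) : (toWeakSpace ℝ X).symm w ∈ K := by
    obtain ⟨-, x, hx, rfl⟩ := w
    simpa using hx
  refine tendsto_toWeakSpace_iff.2 (hF _ _ (fun n ↦ hmem (z n)) (hmem z₀) fun ℓ ↦ ?_)
  exact ((continuous_apply_toWeakSpace_symm ℓ).tendsto _).comp
    ((continuous_subtype_val.tendsto z₀).comp hz)

theorem exists_seq_dual_separating [SecondCountableTopology K] :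
    ∃ ℓ : ℕ → StrongDual ℝ X, ∀ x ∈ K, ∀ y ∈ K, x ≠ y → ∃ n, ℓ n x ≠ ℓ n y := by
  let U (ℓ : StrongDual ℝ X) : Set (K × K) := {p | ℓ p.1 ≠ ℓ p.2}
  obtain ⟨ℓ, hℓ⟩ := eq_open_union_nat U fun ℓ ↦ isOpen_ne_fun (by fun_prop) (by fun_prop)
  refine ⟨ℓ, fun x hx y hy hxy ↦ ?_⟩
  have hmem : (⟨x, hx⟩, ⟨y, hy⟩) ∈ ⋃ ℓ, U ℓ :=
    Set.mem_iUnion.2 (SeparatingDual.exists_separating_of_ne hxy)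
  rwa [← hℓ, Set.mem_iUnion] at hmem

theorem metrizableSpace_toWeakSpace_image [SecondCountableTopology K]
    (hK : IsCompact (toWeakSpace ℝ X '' K)) :
    TopologicalSpace.MetrizableSpace (toWeakSpace ℝ X '' K) := by
  have : CompactSpace (toWeakSpace ℝ X '' K) := isCompact_iff_compactSpace.1 hK
  obtain ⟨ℓ, hℓ⟩ := exists_seq_dual_separating (K := K)
  refine Metric.PiNatEmbed.TopologicalSpace.MetrizableSpace.of_countable_separating
    (fun n (z : toWeakSpace ℝ X '' K) ↦ ℓ n ((toWeakSpace ℝ X).symm z))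
    (fun n ↦ (continuous_apply_toWeakSpace_symm (ℓ n)).comp continuous_subtype_val) ?_
  rintro ⟨-, x, hx, rfl⟩ ⟨-, y, hy, rfl⟩ hxy
  exact hℓ x hx y hy fun h ↦ hxy (by simp [h])

theorem exists_fixedPoint_of_secondCountableTopology [SecondCountableTopology K]
    (hne : K.Nonempty) (hconv : Convex ℝ K) (hK : IsCompact (toWeakSpace ℝ X '' K))
    (hmaps : Set.MapsTo F K K) (hF : WeakSeqContinuousOn F K) : ∃ x ∈ K, F x = x := by
  have := metrizableSpace_toWeakSpace_image hK
  obtain ⟨-, ⟨x, hx, rfl⟩, hfix⟩ := exists_fixedPoint_of_isCompact_of_convex hK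
    (hne.image _) (hconv.is_linear_image (toWeakSpace ℝ X).toLinearMap.isLinear) hF.continuousOn
    (Set.forall_mem_image.2 fun x hx ↦ Set.mem_image_of_mem _ (by simpa using hmaps hx))
  exact ⟨x, hx, by simpa using hfix⟩

end WeakTopology

section SeparableReduction

theorem exists_countable_superset_forall_mem {α : Type*} {s t : Set α} (hs : s.Countable)
    (hst : s ⊆ t) {ops : Set (α → α → α)} (hops : ops.Countable)
    (ht : ∀ f ∈ ops, ∀ x ∈ t, ∀ y ∈ t, f x y ∈ t) :
    ∃ D, D.Countable ∧ s ⊆ D ∧ D ⊆ t ∧ ∀ f ∈ ops, ∀ x ∈ D, ∀ y ∈ D, f x y ∈ D := by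
  let S (n : ℕ) : Set α := (fun A ↦ A ∪ ⋃ f ∈ ops, Set.image2 f A A)^[n] s
  have hS_succ (n : ℕ) : S (n + 1) = S n ∪ ⋃ f ∈ ops, Set.image2 f (S n) (S n) :=
    Function.iterate_succ_apply' _ _ _
  have hS_mono : Monotone S := monotone_nat_of_le_succ fun n ↦ by
    rw [hS_succ]
    exact Set.subset_union_left
  refine ⟨⋃ n, S n, Set.countable_iUnion fun n ↦ ?_, Set.subset_iUnion S 0,
    Set.iUnion_subset fun n ↦ ?_, fun f hf x hx y hy ↦ ?_⟩
  · induction n with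
    | zero => exact hs
    | succ n ih =>
      rw [hS_succ]
      exact ih.union (hops.biUnion fun f _ ↦ ih.image2 ih f)
  · induction n with
    | zero => exact hst
    | succ n ih =>
      rw [hS_succ]
      exact Set.union_subset ih (Set.iUnion₂_subset fun f hf ↦
        Set.image2_subset_iff.2 fun x hx y hy ↦ ht f hf x (ih hx) y (ih hy))
  · obtain ⟨m, hm⟩ := Set.mem_iUnion.1 hx
    obtain ⟨n, hn⟩ := Set.mem_iUnion.1 hy
    refine Set.mem_iUnion.2 ⟨max m n + 1, ?_⟩
    rw [hS_succ]
    exact .inr (Set.mem_biUnion hf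
      (Set.mem_image2_of_mem (hS_mono (le_max_left m n) hm) (hS_mono (le_max_right m n) hn)))

variable {X : Type*} [AddCommGroup X] [Module ℝ X] [TopologicalSpace X] {F : X → X} {D K M : Set X}

theorem convex_closure_of_dense_weights [ContinuousAdd X] [ContinuousSMul ℝ X]
    {Q : Set ℝ} (hQ : Set.Ioo 0 1 ⊆ closure Q)
    (hD : ∀ q ∈ Q, ∀ x ∈ D, ∀ y ∈ D, q • x + (1 - q) • y ∈ D) : Convex ℝ (closure D) := by
  refine convex_iff_forall_pos.2 fun x hx y hy a b ha hb hab ↦ ?_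
  obtain rfl : b = 1 - a := by linarith
  have hmem : (a, x, y) ∈ closure (Q ×ˢ D ×ˢ D) := by
    simp only [closure_prod_eq]
    exact ⟨hQ ⟨ha, by linarith⟩, hx, hy⟩
  have hcont : Continuous fun p : ℝ × X × X ↦ p.1 • p.2.1 + (1 - p.1) • p.2.2 := by fun_prop
  have hmaps : Set.MapsTo (fun p : ℝ × X × X ↦ p.1 • p.2.1 + (1 - p.1) • p.2.2) (Q ×ˢ D ×ˢ D) D :=
    fun p hp ↦ hD _ hp.1 _ hp.2.1 _ hp.2.2
  exact hmaps.closure hcont hmem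

variable [IsTopologicalAddGroup X] [ContinuousSMul ℝ X] [LocallyConvexSpace ℝ X]

theorem mem_of_forall_tendsto_dual (hconv : Convex ℝ K) (hK : IsClosed K) {ι : Type*} {l : Filter ι}
    [l.NeBot] {x : ι → X} {x₀ : X} (hx : ∀ i, x i ∈ K)
    (hlim : ∀ ℓ : StrongDual ℝ X, Tendsto (fun i ↦ ℓ (x i)) l (𝓝 (ℓ x₀))) : x₀ ∈ K := by
  by_contra hx₀
  obtain ⟨ℓ, u, hℓK, hℓ⟩ := geometric_hahn_banach_closed_point hconv hK hx₀
  exact hℓ.not_ge (le_of_tendsto' (hlim ℓ) fun i ↦ (hℓK _ (hx i)).le)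

theorem WeakSeqContinuousOn.mapsTo_closure [FrechetUrysohnSpace X] (hF : WeakSeqContinuousOn F M)
    (hDM : closure D ⊆ M) (hconv : Convex ℝ (closure D)) (hmaps : Set.MapsTo F D D) :
    Set.MapsTo F (closure D) (closure D) := by
  intro x hx
  obtain ⟨d, hd, hlim⟩ := mem_closure_iff_seq_limit.1 hx
  exact mem_of_forall_tendsto_dual hconv isClosed_closure (fun n ↦ subset_closure (hmaps (hd n)))
    (hF d x (fun n ↦ hDM (subset_closure (hd n))) (hDM hx)
      fun ℓ ↦ (ℓ.continuous.tendsto x).comp hlim)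

theorem WeakSeqContinuousOn.exists_isSeparable_mapsTo [FrechetUrysohnSpace X]
    (hF : WeakSeqContinuousOn F M) (hne : M.Nonempty) (hM : IsClosed M) (hconv : Convex ℝ M)
    (hmaps : Set.MapsTo F M M) :
    ∃ K ⊆ M, K.Nonempty ∧ IsClosed K ∧ Convex ℝ K ∧ TopologicalSpace.IsSeparable K ∧
      Set.MapsTo F K K := by
  obtain ⟨a, ha⟩ := hne
  let Q : Set ℝ := Set.Ioo 0 1 ∩ Set.range ((↑) : ℚ → ℝ)
  have hQ : Q.Countable := (Set.countable_range _).mono Set.inter_subset_right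
  obtain ⟨D, hD, haD, hDM, hD_ops⟩ := exists_countable_superset_forall_mem
    (Set.countable_singleton a) (Set.singleton_subset_iff.2 ha)
    (ops := insert (fun x _ ↦ F x) ((fun (q : ℝ) x y ↦ q • x + (1 - q) • y) '' Q))
    ((hQ.image _).insert _) (by
      rintro f (rfl | ⟨q, hq, rfl⟩) x hx y hy
      · exact hmaps hx
      · exact hconv hx hy hq.1.1.le (sub_nonneg.2 hq.1.2.le) (add_sub_cancel _ _))
  have hK_conv : Convex ℝ (closure D) := convex_closure_of_dense_weights
    (Rat.denseRange_cast.open_subset_closure_inter isOpen_Ioo)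
    fun q hq ↦ hD_ops _ (.inr ⟨q, hq, rfl⟩)
  have hKM : closure D ⊆ M := closure_minimal hDM hM
  exact ⟨closure D, hKM, ⟨a, subset_closure (haD rfl)⟩, isClosed_closure, hK_conv,
    hD.isSeparable.closure, hF.mapsTo_closure hKM hK_conv
      fun x hx ↦ hD_ops _ (.inl rfl) x hx x hx⟩

end SeparableReduction

/-- The fixed point theorem of **Arino, Gautier and Penot**. -/
theorem tikhonov_fixed_point_general {X : Type*} [AddCommGroup X] [Module ℝ X]
    [TopologicalSpace X] [IsTopologicalAddGroup X] [ContinuousSMul ℝ X] [LocallyConvexSpace ℝ X]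
    [TopologicalSpace.MetrizableSpace X] {M : Set X} (hne : M.Nonempty) (hconv : Convex ℝ M)
    (hM : IsCompact (toWeakSpace ℝ X '' M)) {F : X → X} (hmaps : Set.MapsTo F M M)
    (hF : WeakSeqContinuousOn F M) : ∃ x ∈ M, F x = x := by
  have : T2Space (WeakSpace ℝ X) := SeparatingDual.t2Space (R := ℝ)
  have hM_closed : IsClosed M := by
    rw [← Set.preimage_image_eq M (toWeakSpace ℝ X).injective]
    exact hM.isClosed.preimage (toWeakSpaceCLM ℝ X).continuous
  obtain ⟨K, hKM, hK_ne, hK, hK_conv, hK_sep, hK_maps⟩ :=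
    hF.exists_isSeparable_mapsTo hne hM_closed hconv hmaps
  have hK_weak : IsClosed (toWeakSpace ℝ X '' K) := by
    rw [← hK.closure_eq, hK_conv.toWeakSpace_closure ℝ]
    exact isClosed_closure
  have := hK_sep.secondCountableTopology
  obtain ⟨x, hx, hfix⟩ := exists_fixedPoint_of_secondCountableTopology hK_ne hK_conv
    (hM.of_isClosed_subset hK_weak (Set.image_mono hKM)) hK_maps (hF.mono hKM)
  exact ⟨x, hKM hx, hfix⟩

theorem isCompact_toWeakSpace_image_of_surjective_inclusionInDoubleDual {X : Type*}
    [NormedAddCommGroup X] [NormedSpace ℝ X]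
    (hrefl : Function.Surjective (NormedSpace.inclusionInDoubleDual ℝ X)) {M : Set X}
    (hbdd : Bornology.IsBounded M) (hclosed : IsClosed M) (hconv : Convex ℝ M) :
    IsCompact (toWeakSpace ℝ X '' M) := by
  rw [← hclosed.closure_eq, hconv.toWeakSpace_closure ℝ]
  refine NormedSpace.isCompact_closure_of_isBounded ℝ X _ ?_ fun z _ ↦ ?_
  · rwa [Set.preimage_image_eq _ (toWeakSpace ℝ X).injective]
  · obtain ⟨x, hx⟩ := hrefl (WeakDual.toStrongDual z)
    exact ⟨toWeakSpace ℝ X x, DFunLike.ext _ _ fun ℓ ↦ DFunLike.congr_fun hx ℓ⟩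

/-- **Tikhonov fixed point theorem.** Let `X` be a separable reflexive real Banach space
(reflexive: the canonical inclusion into the double dual is surjective), `M ⊆ X` a nonempty
bounded closed convex set, and `F` a map sending `M` into `M` which is weakly sequentially
continuous on `M`.  Then `F` has a fixed point in `M`. -/
theorem tikhonov_fixed_point
    {X : Type*} [NormedAddCommGroup X] [NormedSpace ℝ X] [CompleteSpace X]
    [TopologicalSpace.SeparableSpace X]
    (hrefl : Function.Surjective (NormedSpace.inclusionInDoubleDual ℝ X))
    (M : Set X) (hMne : M.Nonempty) (hMbdd : Bornology.IsBounded M)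
    (hMclosed : IsClosed M) (hMconv : Convex ℝ M)
    (F : X → X) (hFmaps : ∀ x ∈ M, F x ∈ M)
    (hFweak : ∀ (x : ℕ → X) (x₀ : X), (∀ n, x n ∈ M) → x₀ ∈ M →
      (∀ ℓ : X →L[ℝ] ℝ, Filter.Tendsto (fun n => ℓ (x n)) Filter.atTop (nhds (ℓ x₀))) →
      (∀ ℓ : X →L[ℝ] ℝ, Filter.Tendsto (fun n => ℓ (F (x n))) Filter.atTop (nhds (ℓ (F x₀))))) :
    ∃ x ∈ M, F x = x := by
  exact tikhonov_fixed_point_general hMne hMconv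
    (isCompact_toWeakSpace_image_of_surjective_inclusionInDoubleDual hrefl hMbdd hMclosed hMconv)
    hFmaps hFweak
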